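/- Let T > 0, ℓ > 0, and let a, f be continuous on [0,T]×[−ℓ,ℓ]×ℝ×ℝ and b(·,±ℓ,·,·), g(·,±ℓ,·,·) continuous on [0,T]×ℝ×ℝ with a > 0 and b(·,±ℓ,·,·) > 0. Let u⁰ : [−ℓ,ℓ] → ℝ be Lipschitz continuous with constant K, i.e. |u⁰(x)−u⁰(y)| ≤ K|x−y|. Let M > 0 and suppose there are q₀ ≥ K and ψ ∈ C¹([0,∞),[1,∞)) with ∫_{q₀}^{∞} ρ/ψ(ρ) dρ > 2M, such that (i) |f(t,x,z,p)| ≤ a(t,x,z,p) ψ(|p|) for all (t,x) ∈ closure(Ω_T), z ∈ [−M,M], p ∈ ℝ, and (ii) ±g(t,ℓ,z,±p) ≤ b(t,ℓ,z,±p)·p and ∓g(t,−ℓ,z,±p) ≤ b(t,−ℓ,z,±p)·p for all t ∈ (0,T], z ∈ [−M,M], p ≥ q₀. Then there exists a constant M₁ = M₁(M,ψ,K,q₀) such that: if τ ≤ T and u is any classical solution of (1),(2) on Ω_τ with u(0,·) = u⁰ and sup_{Ω_τ}|u| ≤ M, then sup_{Ω_τ}|u_x| ≤ M₁. -/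

import Mathlib

/-!
The bound is proved by doubling the space variable. Let `h` solve `h'' = -ψ(h')` on `[0, r]` with
`h 0 = 0`, `h' 0 = q₁` and `h' r = q₀`; taking the slope `q = h'` as parameter gives
`r = ∫_{q₀}^{q₁} dρ / ψ ρ` and `h r = ∫_{q₀}^{q₁} ρ / ψ ρ dρ > 2M` (`exists_barrier`).
The comparison `u(t,x) - u(t,y) ≤ h(x - y)` for `0 ≤ x - y ≤ r` (`sub_le_barrier`) follows from the
maximum principle for `W = u(t,x) - u(t,y) - h(x-y) - ε t`. A positive maximum cannot lie on
`t = 0` (because `h' ≥ q₀ ≥ K`), on `x = y` (because `h 0 = 0`) or on `x - y = r` (because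
`h r > 2M`). Elsewhere the first and second order conditions, with the Bernstein-Nagumo bound
in the interior and the sign condition for slopes `≥ q₀` on the lateral boundary, give
`u_t(t,x) ≤ 0 ≤ u_t(t,y)`, against `W_t ≥ 0`, i.e. `u_t(t,x) - u_t(t,y) ≥ ε`.
Applied to `u` and to `-u`, together with `h 0 = 0` and `h' 0 = q₁`, this bounds `|u_x|` by `q₁`.
-/

open Set Filter MeasureTheory
open scoped Topology

noncomputable section

/-- The time derivative `u_t` of a function `u = u(t,x)`. -/
def timeDeriv (u : ℝ → ℝ → ℝ) (t x : ℝ) : ℝ := deriv (fun s => u s x) t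

/-- The spatial derivative `u_x` of a function `u = u(t,x)`. -/
def spaceDeriv (u : ℝ → ℝ → ℝ) (t x : ℝ) : ℝ := deriv (fun y => u t y) x

/-- The second spatial derivative `u_{xx}` of a function `u = u(t,x)`. -/
def spaceDeriv2 (u : ℝ → ℝ → ℝ) (t x : ℝ) : ℝ := deriv (fun y => spaceDeriv u t y) x

/-- `v` is uniformly `β`-Hölder continuous on `I` with constant `C`. -/
def HolderBnd (β : ℝ) (I : Set ℝ) (v : ℝ → ℝ) (C : ℝ) : Prop :=
  ∀ s ∈ I, ∀ s' ∈ I, |v s - v s'| ≤ C * |s - s'| ^ β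

/-- The `β`-Hölder seminorm `[v]^{(β)}_I`. -/
def hSemi (β : ℝ) (I : Set ℝ) (v : ℝ → ℝ) : ℝ :=
  sSup ((fun p : ℝ × ℝ => |v p.1 - v p.2| / |p.1 - p.2| ^ β) ''
    {p : ℝ × ℝ | p.1 ∈ I ∧ p.2 ∈ I ∧ p.1 ≠ p.2})

/-- The sup-norm of `v` on `I`. -/
def supI (I : Set ℝ) (v : ℝ → ℝ) : ℝ := sSup ((fun s => |v s|) '' I)

/-- The `C^β` norm `|v|^{(β)}_I`. -/
def hNorm (β : ℝ) (I : Set ℝ) (v : ℝ → ℝ) : ℝ := supI I v + hSemi β I v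

/-- The sup-norm of `w` on `(0,τ) × Q`. -/
def supN (τ : ℝ) (Q : Set ℝ) (w : ℝ → ℝ → ℝ) : ℝ :=
  sSup ((fun p : ℝ × ℝ => |w p.1 p.2|) '' (Ioo 0 τ ×ˢ Q))

/-- The parabolic Hölder seminorm `⟨w⟩^{(β/2,β)}_{(0,τ)×Q}`. -/
def pSemi (β τ : ℝ) (Q : Set ℝ) (w : ℝ → ℝ → ℝ) : ℝ :=
  sSup ((fun x => hSemi (β / 2) (Ioo 0 τ) (fun t => w t x)) '' Q) +
    sSup ((fun t => hSemi β Q (fun x => w t x)) '' (Ioo 0 τ))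

/-- Componentwise bound `C` for the parabolic Hölder seminorm `⟨w⟩^{(β/2,β)}_{(0,τ)×Q}`. -/
def PHolderBnd (β τ : ℝ) (Q : Set ℝ) (w : ℝ → ℝ → ℝ) (C : ℝ) : Prop :=
  (∀ x ∈ Q, HolderBnd (β / 2) (Ioo 0 τ) (fun t => w t x) C) ∧
    ∀ t ∈ Ioo (0 : ℝ) τ, HolderBnd β Q (fun x => w t x) C

/-- The norm `|w|^{(β/2,β)}_{(0,τ)×Q}`. -/
def pNorm0 (β τ : ℝ) (Q : Set ℝ) (w : ℝ → ℝ → ℝ) : ℝ := supN τ Q w + pSemi β τ Q w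

/-- The leading parabolic seminorm `⟨u⟩^{(1+α/2,2+α)}_{(0,τ)×Q}`. -/
def pSemi2 (α τ : ℝ) (Q : Set ℝ) (u : ℝ → ℝ → ℝ) : ℝ :=
  pSemi α τ Q (timeDeriv u) + pSemi α τ Q (spaceDeriv2 u) +
    sSup ((fun x => hSemi ((1 + α) / 2) (Ioo 0 τ) (fun t => spaceDeriv u t x)) '' Q)

/-- The parabolic Hölder norm `|u|^{(1+α/2,2+α)}_{(0,τ)×Q}`. -/
def pNorm2 (α τ : ℝ) (Q : Set ℝ) (u : ℝ → ℝ → ℝ) : ℝ :=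
  supN τ Q u + supN τ Q (timeDeriv u) + supN τ Q (spaceDeriv u) +
    supN τ Q (spaceDeriv2 u) + pSemi2 α τ Q u

/-- `C^{1,2}`-regularity (existence of `u_t`, `u_x`, `u_{xx}`) on `(0,τ) × Q`. -/
def Reg12 (τ : ℝ) (Q : Set ℝ) (u : ℝ → ℝ → ℝ) : Prop :=
  ∀ t ∈ Ioo (0 : ℝ) τ, ∀ x ∈ Q,
    DifferentiableAt ℝ (fun s => u s x) t ∧
      DifferentiableAt ℝ (fun y => u t y) x ∧
        DifferentiableAt ℝ (fun y => spaceDeriv u t y) x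

/-- Membership in the parabolic Hölder space `C^{1+α/2,2+α}((0,τ)×Q)`. -/
def MemP (α τ : ℝ) (Q : Set ℝ) (u : ℝ → ℝ → ℝ) : Prop :=
  ContinuousOn (fun p : ℝ × ℝ => u p.1 p.2) (Icc 0 τ ×ˢ closure Q) ∧
    Reg12 τ (closure Q) u ∧
      ∃ C : ℝ,
        (∀ t ∈ Ioo (0 : ℝ) τ, ∀ x ∈ Q,
          |u t x| ≤ C ∧ |timeDeriv u t x| ≤ C ∧ |spaceDeriv u t x| ≤ C ∧
            |spaceDeriv2 u t x| ≤ C) ∧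
          PHolderBnd α τ Q (timeDeriv u) C ∧ PHolderBnd α τ Q (spaceDeriv2 u) C ∧
            ∀ x ∈ Q, HolderBnd ((1 + α) / 2) (Ioo 0 τ) (fun t => spaceDeriv u t x) C

/-- Membership in `C^{2+α}([-ℓ,ℓ])`. -/
def MemC2 (α ℓ : ℝ) (v : ℝ → ℝ) : Prop :=
  ContinuousOn v (Icc (-ℓ) ℓ) ∧
    (∀ x ∈ Icc (-ℓ) ℓ, DifferentiableAt ℝ v x ∧ DifferentiableAt ℝ (deriv v) x) ∧
      ContinuousOn (deriv (deriv v)) (Icc (-ℓ) ℓ) ∧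
        ∃ C : ℝ, HolderBnd α (Icc (-ℓ) ℓ) (deriv (deriv v)) C

/-- The `C^{2+α}([-ℓ,ℓ])` norm. -/
def c2Norm (α ℓ : ℝ) (v : ℝ → ℝ) : ℝ :=
  supI (Icc (-ℓ) ℓ) v + supI (Icc (-ℓ) ℓ) (deriv v) + supI (Icc (-ℓ) ℓ) (deriv (deriv v)) +
    hSemi α (Icc (-ℓ) ℓ) (deriv (deriv v))

/-- Regularity of a classical solution on `(0,τ) × (-ℓ,ℓ)` for a problem with dynamical
boundary conditions at `x = ±ℓ`: continuity on the closed cylinder, interior `C^{1,2}`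
regularity and existence of `u_t` and `u_x` at the lateral boundary. -/
def ClassicalReg (τ ℓ : ℝ) (u : ℝ → ℝ → ℝ) : Prop :=
  ContinuousOn (fun p : ℝ × ℝ => u p.1 p.2) (Icc 0 τ ×ˢ Icc (-ℓ) ℓ) ∧
    Reg12 τ (Ioo (-ℓ) ℓ) u ∧
      ∀ t ∈ Ioo (0 : ℝ) τ,
        DifferentiableAt ℝ (fun s => u s ℓ) t ∧ DifferentiableAt ℝ (fun y => u t y) ℓ ∧
          DifferentiableAt ℝ (fun s => u s (-ℓ)) t ∧ DifferentiableAt ℝ (fun y => u t y) (-ℓ)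

/-- `u` is a classical solution on `(0,τ) × (-ℓ,ℓ)` of the quasilinear equation (1) with the
gradient-dependent dynamical boundary conditions (2) and initial value `u0`. -/
def SolQ (τ ℓ : ℝ) (a f b g : ℝ → ℝ → ℝ → ℝ → ℝ) (u0 : ℝ → ℝ) (u : ℝ → ℝ → ℝ) : Prop :=
  ClassicalReg τ ℓ u ∧
    (∀ t ∈ Ioo (0 : ℝ) τ, ∀ x ∈ Ioo (-ℓ) ℓ,
      timeDeriv u t x - a t x (u t x) (spaceDeriv u t x) * spaceDeriv2 u t x
        = f t x (u t x) (spaceDeriv u t x)) ∧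
      (∀ t ∈ Ioo (0 : ℝ) τ,
        timeDeriv u t ℓ + b t ℓ (u t ℓ) (spaceDeriv u t ℓ) * spaceDeriv u t ℓ
            = g t ℓ (u t ℓ) (spaceDeriv u t ℓ) ∧
          timeDeriv u t (-ℓ) - b t (-ℓ) (u t (-ℓ)) (spaceDeriv u t (-ℓ)) * spaceDeriv u t (-ℓ)
            = g t (-ℓ) (u t (-ℓ)) (spaceDeriv u t (-ℓ))) ∧
        ∀ x ∈ Icc (-ℓ) ℓ, u 0 x = u0 x

/-- `u` is a classical solution on `(0,τ) × (-ℓ,ℓ)` of the quasilinear equation (1) with the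
gradient-independent dynamical boundary conditions (2a) and initial value `u0`. -/
def SolQ2a (τ ℓ : ℝ) (a f : ℝ → ℝ → ℝ → ℝ → ℝ) (b g : ℝ → ℝ → ℝ → ℝ) (u0 : ℝ → ℝ)
    (u : ℝ → ℝ → ℝ) : Prop :=
  ClassicalReg τ ℓ u ∧
    (∀ t ∈ Ioo (0 : ℝ) τ, ∀ x ∈ Ioo (-ℓ) ℓ,
      timeDeriv u t x - a t x (u t x) (spaceDeriv u t x) * spaceDeriv2 u t x
        = f t x (u t x) (spaceDeriv u t x)) ∧
      (∀ t ∈ Ioo (0 : ℝ) τ,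
        timeDeriv u t ℓ + b t ℓ (u t ℓ) * spaceDeriv u t ℓ = g t ℓ (u t ℓ) ∧
          timeDeriv u t (-ℓ) - b t (-ℓ) (u t (-ℓ)) * spaceDeriv u t (-ℓ) = g t (-ℓ) (u t (-ℓ))) ∧
        ∀ x ∈ Icc (-ℓ) ℓ, u 0 x = u0 x

/-! ### First and second order conditions at a maximum -/

lemma deriv_nonneg_of_left_max {F : ℝ → ℝ} {c x : ℝ} (hF : HasDerivAt F c x)
    (hm : ∀ᶠ s in 𝓝[<] x, F s ≤ F x) : 0 ≤ c := by
  have h1 := (hasDerivWithinAt_iff_tendsto_slope' (s := Iio x) (by simp)).1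
    (hF.hasDerivWithinAt (s := Iio x))
  refine ge_of_tendsto h1 ?_
  filter_upwards [hm, self_mem_nhdsWithin] with s hs hs'
  rw [slope_def_field]
  exact div_nonneg_of_nonpos (by linarith) (by have : s < x := hs'; linarith)

lemma deriv_nonpos_of_right_max {F : ℝ → ℝ} {c x : ℝ} (hF : HasDerivAt F c x)
    (hm : ∀ᶠ s in 𝓝[>] x, F s ≤ F x) : c ≤ 0 := by
  have h1 := (hasDerivWithinAt_iff_tendsto_slope' (s := Ioi x) (by simp)).1
    (hF.hasDerivWithinAt (s := Ioi x))
  refine le_of_tendsto h1 ?_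
  filter_upwards [hm, self_mem_nhdsWithin] with s hs hs'
  rw [slope_def_field]
  exact div_nonpos_of_nonpos_of_nonneg (by linarith) (by have : x < s := hs'; linarith)

lemma second_deriv_nonpos {F F' : ℝ → ℝ} {c x : ℝ} (hF : ∀ᶠ s in 𝓝 x, HasDerivAt F (F' s) s)
    (hF' : HasDerivAt F' c x) (hm : IsLocalMax F x) : c ≤ 0 := by
  by_contra! hc
  have e1 : deriv F =ᶠ[𝓝 x] F' := hF.mono fun s hs => hs.deriv
  have e2 : deriv (deriv F) x = c := by rw [e1.deriv_eq, hF'.deriv]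
  have hmin := isLocalMin_of_deriv_deriv_pos (by rw [e2]; exact hc) hm.deriv_eq_zero
    hF.self_of_nhds.continuousAt
  -- a simultaneous local maximum and minimum makes `F` locally constant
  have e3 : F =ᶠ[𝓝 x] fun _ => F x := by
    filter_upwards [hm, hmin] with s h1 h2 using le_antisymm h1 h2
  have e4 : deriv F =ᶠ[𝓝 x] fun _ => 0 := by
    have := e3.deriv
    simpa using this
  have e5 := e4.deriv_eq
  rw [e2] at e5
  simp at e5
  linarith

/-! ### The barrier -/

/-- The barrier `h`, a solution of `h'' = -ψ(h')` whose slope `hp = h'` decreases from at most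
`q₁` to at least `q₀` on `[0, r]`. It is `s ↦ P q₁ - P (φ (r - s))`, where
`P q = ∫_{q₀}^q ρ / ψ ρ dρ` and `φ` is the inverse of `q ↦ ∫_{q₀}^q dρ / ψ ρ`; `ψ` is frozen
outside `[q₀, q₁]` so that `φ` is defined on all of `ℝ`. -/
lemma exists_barrier {M q₀ q₁ : ℝ} {ψ : ℝ → ℝ} (hq0 : 0 ≤ q₀) (hq : q₀ < q₁)
    (hψ : ContinuousOn ψ (Ici 0)) (hψ1 : ∀ ρ ∈ Ici (0:ℝ), 1 ≤ ψ ρ)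
    (hint : 2 * M < ∫ ρ in q₀..q₁, ρ / ψ ρ) :
    ∃ (r : ℝ) (h hp : ℝ → ℝ), 0 < r ∧ h 0 = 0 ∧ 2 * M < h r ∧ (∀ s, HasDerivAt h (hp s) s) ∧
      (∀ s ∈ Icc 0 r, q₀ ≤ hp s ∧ hp s ≤ q₁) ∧
      (∀ s ∈ Icc 0 r, HasDerivAt hp (-ψ (hp s)) s) := by
  set Ψ : ℝ → ℝ := fun ρ => ψ (max q₀ (min ρ q₁)) with hΨ
  have hΨc : Continuous Ψ := by
    refine hψ.comp_continuous (by fun_prop) fun ρ => ?_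
    exact hq0.trans (le_max_left _ _)
  have hΨ1 : ∀ ρ, 1 ≤ Ψ ρ := fun ρ => hψ1 _ (hq0.trans (le_max_left _ _))
  have hΨ0 : ∀ ρ, Ψ ρ ≠ 0 := fun ρ => by have := hΨ1 ρ; positivity
  have hΨe : ∀ ρ ∈ Icc q₀ q₁, Ψ ρ = ψ ρ := fun ρ h => by
    simp only [hΨ, min_eq_left h.2, max_eq_right h.1]
  have hkc : Continuous fun ρ => (Ψ ρ)⁻¹ := hΨc.inv₀ hΨ0
  have hjc : Continuous fun ρ => ρ * (Ψ ρ)⁻¹ := continuous_id.mul hkc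
  set G : ℝ → ℝ := fun q => ∫ ρ in q₀..q, (Ψ ρ)⁻¹ with hG
  set P : ℝ → ℝ := fun q => ∫ ρ in q₀..q, ρ * (Ψ ρ)⁻¹ with hP
  have hGd : ∀ q, HasDerivAt G (Ψ q)⁻¹ q := fun q => hkc.integral_hasStrictDerivAt q₀ q |>.hasDerivAt
  have hPd : ∀ q, HasDerivAt P (q * (Ψ q)⁻¹) q := fun q =>
    hjc.integral_hasStrictDerivAt q₀ q |>.hasDerivAt
  have hGc : Continuous G := continuous_iff_continuousAt.2 fun q => (hGd q).continuousAt
  have hGm : StrictMono G := strictMono_of_deriv_pos fun q => by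
    rw [(hGd q).deriv]; have := hΨ1 q; positivity
  -- a uniform lower bound on the slope of `G` makes `G` surjective
  obtain ⟨c, hc0, hc⟩ : ∃ c : ℝ, 0 < c ∧ ∀ q, c ≤ (Ψ q)⁻¹ := by
    obtain ⟨B, hB⟩ := (isCompact_Icc (a := q₀) (b := q₁)).bddAbove_image
      (hψ.mono fun x hx => hq0.trans hx.1)
    have hΨB : ∀ q, Ψ q ≤ B := fun q => hB ⟨_, ⟨le_max_left _ _,
      max_le hq.le (min_le_right _ _)⟩, rfl⟩
    have hB1 : 1 ≤ B := (hΨ1 0).trans (hΨB 0)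
    refine ⟨B⁻¹, by positivity, fun q => ?_⟩
    have := hΨ1 q
    exact inv_anti₀ (by positivity) (hΨB q)
  have hGmono : Monotone fun q => G q - c * q := by
    have hd : ∀ q, HasDerivAt (fun q => G q - c * q) ((Ψ q)⁻¹ - c * 1) q := fun q =>
      (hGd q).sub ((hasDerivAt_id q).const_mul c)
    refine monotone_of_deriv_nonneg (fun q => (hd q).differentiableAt) fun q => ?_
    rw [(hd q).deriv]; linarith [hc q]
  have hGs : Function.Surjective G := by
    refine hGc.surjective ?_ ?_
    · refine tendsto_atTop_mono' _ (f₁ := fun q => (G 0 - c * 0) + c * q) ?_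
        (tendsto_atTop_add_const_left _ _ (tendsto_id.const_mul_atTop hc0))
      filter_upwards [eventually_ge_atTop 0] with q hq
      have := hGmono hq; simp only at this; linarith
    · refine tendsto_atBot_mono' _ (f₁ := fun q => (G 0 - c * 0) + c * q) ?_
        (tendsto_atBot_add_const_left _ _ (tendsto_id.const_mul_atBot hc0))
      filter_upwards [eventually_le_atBot 0] with q hq
      have := hGmono hq; simp only at this; linarith
  let e := hGm.orderIsoOfSurjective G hGs
  set φ : ℝ → ℝ := fun s => e.symm s with hφ
  have hφG : ∀ q, φ (G q) = q := fun q => e.symm_apply_apply q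
  have hGφ : ∀ s, G (φ s) = s := fun s => e.apply_symm_apply s
  have hφc : Continuous φ := e.symm.continuous
  have hφm : Monotone φ := e.symm.monotone
  have hφd : ∀ s, HasDerivAt φ (Ψ (φ s)) s := fun s => by
    have := HasDerivAt.of_local_left_inverse hφc.continuousAt (hGd (φ s))
      (inv_ne_zero (hΨ0 _)) (Eventually.of_forall hGφ)
    simpa using this
  have hG0 : G q₀ = 0 := by simp [hG]
  have hP0 : P q₀ = 0 := by simp [hP]
  have hφ0 : φ 0 = q₀ := by rw [← hG0, hφG]
  have hr : 0 < G q₁ := hG0 ▸ hGm hq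
  have hφ1 := hφG q₁
  have hshift : ∀ s, HasDerivAt (fun s => G q₁ - s) (-1) s := fun s => by
    simpa using (hasDerivAt_id s).const_sub (G q₁)
  have hrange : ∀ s ∈ Icc 0 (G q₁), q₀ ≤ φ (G q₁ - s) ∧ φ (G q₁ - s) ≤ q₁ := fun s hs =>
    ⟨hφ0 ▸ hφm (by linarith [hs.2]), by
      have := hφm (show G q₁ - s ≤ G q₁ by linarith [hs.1]); rwa [hφ1] at this⟩
  refine ⟨G q₁, fun s => P q₁ - P (φ (G q₁ - s)), fun s => φ (G q₁ - s), hr, ?_, ?_, ?_,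
    hrange, ?_⟩
  · simp [hφ1]
  · have : P q₁ = ∫ ρ in q₀..q₁, ρ / ψ ρ := by
      refine intervalIntegral.integral_congr fun ρ hρ => ?_
      rw [uIcc_of_le hq.le] at hρ
      simp only [hΨe ρ hρ, div_eq_mul_inv]
    simp only [sub_self, hφ0, hP0, sub_zero]
    rw [this]; exact hint
  · intro s
    have := (((hPd _).comp _ (hφd _)).comp s (hshift s)).const_sub (P q₁)
    refine this.congr_deriv ?_
    have := hΨ0 (φ (G q₁ - s))
    field_simp
  · intro s hs
    have := (hφd _).comp s (hshift s)
    refine this.congr_deriv ?_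
    rw [hΨe _ (hrange s hs)]; ring

/-! ### Doubling of the space variable -/

/-- The doubling argument. The equation enters only as an inequality for some `A > 0`, and the
boundary conditions only as sign conditions on `u_t` where the slope is at least `q₀`. -/
lemma sub_le_barrier {τ ℓ K M q₀ q₁ r : ℝ} {ψ h hp : ℝ → ℝ} {u : ℝ → ℝ → ℝ}
    (hl : 0 < ℓ) (hKq : K ≤ q₀) (hq0 : 0 ≤ q₀)
    (hr : 0 < r) (h0 : h 0 = 0) (hM : 2 * M < h r) (hd : ∀ s, HasDerivAt h (hp s) s)
    (hpr : ∀ s ∈ Icc 0 r, q₀ ≤ hp s ∧ hp s ≤ q₁)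
    (hpd : ∀ s ∈ Icc 0 r, HasDerivAt hp (-ψ (hp s)) s)
    (hu : ClassicalReg τ ℓ u)
    (hbd : ∀ t ∈ Ioo (0:ℝ) τ, ∀ x ∈ Icc (-ℓ) ℓ, |u t x| ≤ M)
    (hini : ∀ x ∈ Icc (-ℓ) ℓ, ∀ y ∈ Icc (-ℓ) ℓ, |u 0 x - u 0 y| ≤ K * |x - y|)
    (heq : ∀ t ∈ Ioo (0:ℝ) τ, ∀ x ∈ Ioo (-ℓ) ℓ, ∃ A : ℝ, 0 < A ∧
      |timeDeriv u t x - A * spaceDeriv2 u t x| ≤ A * ψ |spaceDeriv u t x|)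
    (hbr : ∀ t ∈ Ioo (0:ℝ) τ, q₀ ≤ spaceDeriv u t ℓ → timeDeriv u t ℓ ≤ 0)
    (hbl : ∀ t ∈ Ioo (0:ℝ) τ, q₀ ≤ spaceDeriv u t (-ℓ) → 0 ≤ timeDeriv u t (-ℓ)) :
    ∀ t ∈ Ioo (0:ℝ) τ, ∀ x ∈ Icc (-ℓ) ℓ, ∀ y ∈ Icc (-ℓ) ℓ, y ≤ x → x - y ≤ r →
      u t x - u t y ≤ h (x - y) := by
  obtain ⟨hcont, hreg, hbreg⟩ := hu
  intro t1 ht1 x1 hx1 y1 hy1 hyx1 hxr1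
  have hhc : Continuous h := continuous_iff_continuousAt.2 fun q => (hd q).continuousAt
  have hlin : ∀ s ∈ Icc 0 r, q₀ * s ≤ h s := by
    have hdd : ∀ s, HasDerivAt (fun s => h s - q₀ * s) (hp s - q₀ * 1) s := fun s =>
      (hd s).sub ((hasDerivAt_id s).const_mul q₀)
    have hmono : MonotoneOn (fun s => h s - q₀ * s) (Icc 0 r) := by
      refine monotoneOn_of_deriv_nonneg (convex_Icc _ _)
        (fun s _ => (hdd s).continuousAt.continuousWithinAt)
        (fun s _ => (hdd s).differentiableAt.differentiableWithinAt) fun s hs => ?_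
      rw [(hdd s).deriv]
      have := (hpr s (interior_subset hs)).1
      linarith
    intro s hs
    have := hmono ⟨le_rfl, hr.le⟩ hs hs.1
    simp only [h0] at this
    linarith
  have hdt : ∀ t ∈ Ioo (0:ℝ) τ, ∀ x ∈ Icc (-ℓ) ℓ,
      HasDerivAt (fun s => u s x) (timeDeriv u t x) t := by
    intro t ht x hx
    refine DifferentiableAt.hasDerivAt ?_
    rcases eq_or_lt_of_le hx.2 with h2 | h2
    · subst h2; exact (hbreg t ht).1
    rcases eq_or_lt_of_le hx.1 with h1 | h1
    · subst h1; exact (hbreg t ht).2.2.1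
    · exact (hreg t ht x ⟨h1, h2⟩).1
  have hdx : ∀ t ∈ Ioo (0:ℝ) τ, ∀ x ∈ Icc (-ℓ) ℓ,
      HasDerivAt (fun s => u t s) (spaceDeriv u t x) x := by
    intro t ht x hx
    refine DifferentiableAt.hasDerivAt ?_
    rcases eq_or_lt_of_le hx.2 with h2 | h2
    · subst h2; exact (hbreg t ht).2.1
    rcases eq_or_lt_of_le hx.1 with h1 | h1
    · subst h1; exact (hbreg t ht).2.2.2
    · exact (hreg t ht x ⟨h1, h2⟩).2.1
  have hdxx : ∀ t ∈ Ioo (0:ℝ) τ, ∀ x ∈ Ioo (-ℓ) ℓ,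
      HasDerivAt (fun s => spaceDeriv u t s) (spaceDeriv2 u t x) x := fun t ht x hx =>
    (hreg t ht x hx).2.2.hasDerivAt
  suffices H : ∀ ε : ℝ, 0 < ε → u t1 x1 - u t1 y1 - h (x1 - y1) - ε * t1 ≤ 0 by
    refine le_of_forall_pos_le_add fun δ hδ => ?_
    have := H (δ / t1) (div_pos hδ ht1.1)
    rw [div_mul_cancel₀ _ ht1.1.ne'] at this
    linarith
  intro ε hε
  let D : Set (ℝ × ℝ × ℝ) := (Icc 0 t1 ×ˢ Icc (-ℓ) ℓ ×ˢ Icc (-ℓ) ℓ) ∩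
    {q | q.2.2 ≤ q.2.1 ∧ q.2.1 - q.2.2 ≤ r}
  let W : ℝ × ℝ × ℝ → ℝ := fun q => u q.1 q.2.1 - u q.1 q.2.2 - h (q.2.1 - q.2.2) - ε * q.1
  have hDc : IsCompact D := by
    refine (isCompact_Icc.prod (isCompact_Icc.prod isCompact_Icc)).inter_right ?_
    exact (isClosed_le (f := fun q : ℝ × ℝ × ℝ => q.2.2) (g := fun q => q.2.1)
      (by fun_prop) (by fun_prop)).inter
      (isClosed_le (f := fun q : ℝ × ℝ × ℝ => q.2.1 - q.2.2) (g := fun _ => r)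
        (by fun_prop) (by fun_prop))
  have hWc : ContinuousOn W D := by
    have hsub : ∀ s ∈ Icc 0 t1, s ∈ Icc 0 τ := fun s hs => ⟨hs.1, hs.2.trans ht1.2.le⟩
    have c1 : ContinuousOn (fun q : ℝ × ℝ × ℝ => u q.1 q.2.1) D :=
      hcont.comp (f := fun q : ℝ × ℝ × ℝ => (q.1, q.2.1)) (by fun_prop)
        fun q hq => ⟨hsub _ hq.1.1, hq.1.2.1⟩
    have c2 : ContinuousOn (fun q : ℝ × ℝ × ℝ => u q.1 q.2.2) D :=
      hcont.comp (f := fun q : ℝ × ℝ × ℝ => (q.1, q.2.2)) (by fun_prop)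
        fun q hq => ⟨hsub _ hq.1.1, hq.1.2.2⟩
    have c3 : Continuous fun q : ℝ × ℝ × ℝ => h (q.2.1 - q.2.2) := hhc.comp (by fun_prop)
    exact ((c1.sub c2).sub c3.continuousOn).sub (by fun_prop)
  have hmem1 : (t1, x1, y1) ∈ D := ⟨⟨⟨ht1.1.le, le_rfl⟩, hx1, hy1⟩, hyx1, hxr1⟩
  obtain ⟨⟨t, x, y⟩, hmem, hmax⟩ := hDc.exists_isMaxOn ⟨_, hmem1⟩ hWc
  have hWmax : ∀ s x' y', 0 ≤ s → s ≤ t1 → x' ∈ Icc (-ℓ) ℓ → y' ∈ Icc (-ℓ) ℓ → y' ≤ x' →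
      x' - y' ≤ r → u s x' - u s y' - h (x' - y') - ε * s ≤
        u t x - u t y - h (x - y) - ε * t := fun s x' y' a1 a2 a3 a4 a5 a6 =>
    hmax (show (s, x', y') ∈ D from ⟨⟨⟨a1, a2⟩, a3, a4⟩, a5, a6⟩)
  refine (hmax hmem1).trans ?_
  obtain ⟨⟨ht, hx, hy⟩, hyx, hxr⟩ := hmem
  simp only at ht hx hy hyx hxr
  change u t x - u t y - h (x - y) - ε * t ≤ 0
  by_contra! hpos
  have hs : x - y ∈ Icc 0 r := ⟨by linarith, hxr⟩
  have ht0 : 0 < t := by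
    refine lt_of_le_of_ne ht.1 fun h => ?_
    subst h
    have i1 := (le_abs_self _).trans (hini x hx y hy)
    rw [abs_of_nonneg hs.1] at i1
    have i2 := hlin _ hs
    have := mul_le_mul_of_nonneg_right hKq hs.1
    linarith
  have htτ : t ∈ Ioo 0 τ := ⟨ht0, ht.2.trans_lt ht1.2⟩
  have hεt : 0 < ε * t := mul_pos hε ht0
  have hyx' : y < x := by
    refine lt_of_le_of_ne hyx fun h => ?_
    subst h
    simp only [sub_self, h0] at hpos
    linarith
  have hxr' : x - y < r := by
    refine lt_of_le_of_ne hxr fun h => ?_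
    rw [h] at hpos
    have b1 := abs_le.1 (hbd t htτ x hx)
    have b2 := abs_le.1 (hbd t htτ y hy)
    linarith [b1.1, b1.2, b2.1, b2.2]
  have hpq := (hpr _ hs).1
  have habs : |hp (x - y)| = hp (x - y) := abs_of_nonneg (hq0.trans hpq)
  -- derivatives of `W` in each space variable
  have hFx : ∀ s ∈ Icc (-ℓ) ℓ, HasDerivAt (fun s => u t s - h (s - y))
      (spaceDeriv u t s - hp (s - y)) s := fun s hs =>
    (hdx t htτ s hs).sub ((hd (s - y)).comp_sub_const s y)
  have hFy : ∀ s ∈ Icc (-ℓ) ℓ, HasDerivAt (fun s => -u t s - h (x - s))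
      (-spaceDeriv u t s + hp (x - s)) s := fun s hs =>
    ((hdx t htτ s hs).neg.sub ((hd (x - s)).comp_const_sub x s)).congr_deriv (by ring)
  have hx_le : ∀ s ∈ Icc (-ℓ) ℓ, y ≤ s → s - y ≤ r → u t s - h (s - y) ≤ u t x - h (x - y) :=
    fun s hs a1 a2 => by linarith [hWmax t s y ht0.le ht.2 hs hy a1 a2]
  have hy_le : ∀ s ∈ Icc (-ℓ) ℓ, s ≤ x → x - s ≤ r → -u t s - h (x - s) ≤ -u t y - h (x - y) :=
    fun s hs a1 a2 => by linarith [hWmax t x s ht0.le ht.2 hx hs a1 a2]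
  have claim1 : timeDeriv u t x ≤ 0 := by
    rcases eq_or_lt_of_le hx.2 with h2 | h2
    · have := deriv_nonneg_of_left_max (hFx x hx) (by
        filter_upwards [Ioo_mem_nhdsLT hyx'] with s hs
        exact hx_le s ⟨by linarith [hs.1, hy.1], by linarith [hs.2, hx.2]⟩ hs.1.le
          (by linarith [hs.2]))
      have := hbr t htτ (by rw [← h2]; linarith)
      rwa [h2]
    · have hxi : x ∈ Ioo (-ℓ) ℓ := ⟨by linarith [hy.1], h2⟩
      have hloc : IsLocalMax (fun s => u t s - h (s - y)) x := by
        filter_upwards [Ioo_mem_nhds hyx' h2, Iio_mem_nhds (show x < r + y by linarith)]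
          with s hs hs2
        have : s < r + y := hs2
        exact hx_le s ⟨by linarith [hs.1, hy.1], hs.2.le⟩ hs.1.le (by linarith)
      have e1 := hloc.hasDerivAt_eq_zero (hFx x hx)
      have e2 := second_deriv_nonpos
        (by filter_upwards [Ioo_mem_nhds hxi.1 hxi.2] with s hs using hFx s ⟨hs.1.le, hs.2.le⟩)
        ((hdxx t htτ x hxi).sub ((hpd _ hs).comp_sub_const x y)) hloc
      obtain ⟨A, hA, hAe⟩ := heq t htτ x hxi
      rw [show spaceDeriv u t x = hp (x - y) by linarith, habs] at hAe
      have := mul_nonpos_of_nonneg_of_nonpos hA.le e2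
      linarith [(abs_le.1 hAe).2]
  have claim2 : 0 ≤ timeDeriv u t y := by
    rcases eq_or_lt_of_le hy.1 with h2 | h2
    · have := deriv_nonpos_of_right_max (hFy y hy) (by
        filter_upwards [Ioo_mem_nhdsGT hyx'] with s hs
        exact hy_le s ⟨by linarith [hs.1, hy.1], by linarith [hs.2, hx.2]⟩ hs.2.le
          (by linarith [hs.1]))
      have := hbl t htτ (by rw [h2]; linarith)
      rwa [← h2]
    · have hyi : y ∈ Ioo (-ℓ) ℓ := ⟨h2, by linarith [hx.2]⟩
      have hloc : IsLocalMax (fun s => -u t s - h (x - s)) y := by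
        filter_upwards [Ioo_mem_nhds h2 hyx', Ioi_mem_nhds (show x - r < y by linarith)]
          with s hs hs2
        have : x - r < s := hs2
        exact hy_le s ⟨hs.1.le, by linarith [hs.2, hx.2]⟩ hs.2.le (by linarith)
      have e1 := hloc.hasDerivAt_eq_zero (hFy y hy)
      have e2 := second_deriv_nonpos
        (by filter_upwards [Ioo_mem_nhds hyi.1 hyi.2] with s hs using hFy s ⟨hs.1.le, hs.2.le⟩)
        ((hdxx t htτ y hyi).neg.add ((hpd _ hs).comp_const_sub x y)) hloc
      obtain ⟨A, hA, hAe⟩ := heq t htτ y hyi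
      rw [show spaceDeriv u t y = hp (x - y) by linarith, habs] at hAe
      have := mul_nonpos_of_nonneg_of_nonpos hA.le e2
      linarith [(abs_le.1 hAe).1]
  have hFt : HasDerivAt (fun s => u s x - u s y - ε * s)
      (timeDeriv u t x - timeDeriv u t y - ε * 1) t :=
    ((hdt t htτ x hx).sub (hdt t htτ y hy)).sub ((hasDerivAt_id t).const_mul ε)
  -- only `s < t` is used, since the maximum may lie on the top face `t = t1`
  have claim3 := deriv_nonneg_of_left_max hFt (by
    filter_upwards [Ioo_mem_nhdsLT ht0] with s hs
    linarith [hWmax s x y hs.1.le (hs.2.le.trans ht.2) hx hy hyx hxr])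
  linarith

/-! ### Extension to the closure, and symmetry under `u ↦ -u` -/

/-- The bound `|u| ≤ M` extends by continuity to the lateral boundary. -/
lemma abs_le_on_closure {τ ℓ M : ℝ} {u : ℝ → ℝ → ℝ} (hl : 0 < ℓ)
    (hc : ContinuousOn (fun p : ℝ × ℝ => u p.1 p.2) (Icc 0 τ ×ˢ Icc (-ℓ) ℓ))
    (hbd : ∀ t ∈ Ioo (0:ℝ) τ, ∀ x ∈ Ioo (-ℓ) ℓ, |u t x| ≤ M) :
    ∀ t ∈ Ioo (0:ℝ) τ, ∀ x ∈ Icc (-ℓ) ℓ, |u t x| ≤ M := by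
  intro t ht x hx
  have hcl : closure (Ioo (-ℓ) ℓ) = Icc (-ℓ) ℓ := closure_Ioo (by linarith)
  have hct : ContinuousOn (fun y => |u t y|) (closure (Ioo (-ℓ) ℓ)) := by
    rw [hcl]
    exact (hc.comp (f := fun y => (t, y)) (by fun_prop) fun y hy => ⟨⟨ht.1.le, ht.2.le⟩, hy⟩).abs
  exact le_on_closure (hbd t ht) hct continuousOn_const (hcl ▸ hx)

lemma timeDeriv_neg (u : ℝ → ℝ → ℝ) (t x : ℝ) :
    timeDeriv (fun t x => -u t x) t x = -timeDeriv u t x := deriv.fun_neg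

lemma spaceDeriv_neg (u : ℝ → ℝ → ℝ) (t x : ℝ) :
    spaceDeriv (fun t x => -u t x) t x = -spaceDeriv u t x := deriv.fun_neg

lemma spaceDeriv2_neg (u : ℝ → ℝ → ℝ) (t x : ℝ) :
    spaceDeriv2 (fun t x => -u t x) t x = -spaceDeriv2 u t x := by
  simp only [spaceDeriv2, spaceDeriv_neg]
  exact deriv.fun_neg

lemma ClassicalReg.neg {τ ℓ : ℝ} {u : ℝ → ℝ → ℝ} (hu : ClassicalReg τ ℓ u) :
    ClassicalReg τ ℓ (fun t x => -u t x) := by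
  obtain ⟨h1, h2, h3⟩ := hu
  refine ⟨h1.neg, fun t ht x hx => ?_, fun t ht => ?_⟩
  · obtain ⟨a, b, c⟩ := h2 t ht x hx
    refine ⟨a.neg, b.neg, ?_⟩
    simp only [spaceDeriv_neg]
    exact c.neg
  · obtain ⟨a, b, c, d⟩ := h3 t ht
    exact ⟨a.neg, b.neg, c.neg, d.neg⟩

/-! ### The gradient bound -/

/-- If `h 0 = 0` and `h` dominates all small increments of `v`, then `v' ≤ h' 0`. -/
lemma deriv_le_of_barrier {v h hp : ℝ → ℝ} {x c q r ℓ : ℝ} (hr : 0 < r) (h0 : h 0 = 0)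
    (hd : ∀ s, HasDerivAt h (hp s) s) (hq : hp 0 ≤ q) (hx : x ∈ Ioo (-ℓ) ℓ)
    (hv : HasDerivAt v c x)
    (hb : ∀ z ∈ Icc (-ℓ) ℓ, ∀ y ∈ Icc (-ℓ) ℓ, y ≤ z → z - y ≤ r → v z - v y ≤ h (z - y)) :
    c ≤ q := by
  have hd0 : HasDerivAt h (hp 0) (x - x) := by rw [sub_self]; exact hd 0
  have hF : HasDerivAt (fun s => v s - h (s - x)) (c - hp 0) x := hv.sub (hd0.comp_sub_const x x)
  have := deriv_nonpos_of_right_max hF (by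
    filter_upwards [Ioo_mem_nhdsGT hx.2, Ioo_mem_nhdsGT (show x < x + r by linarith)] with s h1 h2
    have := hb s ⟨by linarith [hx.1, h1.1], h1.2.le⟩ x ⟨hx.1.le, hx.2.le⟩ h1.1.le
      (by linarith [h2.2])
    simp only [sub_self, h0]
    linarith)
  linarith

/-- Theorem 3.1: a priori gradient bound under the Bernstein-Nagumo condition for
bounded classical solutions of (1), (2). -/
theorem gradient_bound_Bernstein_Nagumo
    (T ℓ K M q₀ : ℝ) (ψ : ℝ → ℝ)
    (hT : 0 < T) (hl : 0 < ℓ) (hM : 0 < M) (hK : 0 ≤ K) (hKq : K ≤ q₀)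
    (hψreg : ContDiffOn ℝ 1 ψ (Ici 0)) (hψ1 : ∀ ρ ∈ Ici (0:ℝ), 1 ≤ ψ ρ)
    (hint : ∃ q₁ : ℝ, q₀ < q₁ ∧ 2 * M < ∫ ρ in q₀..q₁, ρ / ψ ρ) :
    ∃ M₁ : ℝ, ∀ (a f b g : ℝ → ℝ → ℝ → ℝ → ℝ) (u0 : ℝ → ℝ),
      ContinuousOn (fun q : ℝ × ℝ × ℝ × ℝ => a q.1 q.2.1 q.2.2.1 q.2.2.2)
        (Icc (0:ℝ) T ×ˢ Icc (-ℓ) ℓ ×ˢ (univ : Set (ℝ × ℝ))) →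
      ContinuousOn (fun q : ℝ × ℝ × ℝ × ℝ => f q.1 q.2.1 q.2.2.1 q.2.2.2)
        (Icc (0:ℝ) T ×ˢ Icc (-ℓ) ℓ ×ˢ (univ : Set (ℝ × ℝ))) →
      ContinuousOn (fun q : ℝ × ℝ × ℝ => b q.1 ℓ q.2.1 q.2.2)
        (Icc (0:ℝ) T ×ˢ (univ : Set (ℝ × ℝ))) →
      ContinuousOn (fun q : ℝ × ℝ × ℝ => b q.1 (-ℓ) q.2.1 q.2.2)
        (Icc (0:ℝ) T ×ˢ (univ : Set (ℝ × ℝ))) →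
      ContinuousOn (fun q : ℝ × ℝ × ℝ => g q.1 ℓ q.2.1 q.2.2)
        (Icc (0:ℝ) T ×ˢ (univ : Set (ℝ × ℝ))) →
      ContinuousOn (fun q : ℝ × ℝ × ℝ => g q.1 (-ℓ) q.2.1 q.2.2)
        (Icc (0:ℝ) T ×ˢ (univ : Set (ℝ × ℝ))) →
      (∀ t ∈ Icc (0:ℝ) T, ∀ x ∈ Icc (-ℓ) ℓ, ∀ z p : ℝ, 0 < a t x z p) →
      (∀ t ∈ Icc (0:ℝ) T, ∀ z p : ℝ, 0 < b t ℓ z p ∧ 0 < b t (-ℓ) z p) →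
      (∀ x ∈ Icc (-ℓ) ℓ, ∀ y ∈ Icc (-ℓ) ℓ, |u0 x - u0 y| ≤ K * |x - y|) →
      (∀ t ∈ Icc (0:ℝ) T, ∀ x ∈ Icc (-ℓ) ℓ, ∀ z ∈ Icc (-M) M, ∀ p : ℝ,
        |f t x z p| ≤ a t x z p * ψ (|p|)) →
      (∀ t ∈ Ioc (0:ℝ) T, ∀ z ∈ Icc (-M) M, ∀ p : ℝ, q₀ ≤ p →
        g t ℓ z p ≤ b t ℓ z p * p ∧ -g t ℓ z (-p) ≤ b t ℓ z (-p) * p ∧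
        -g t (-ℓ) z p ≤ b t (-ℓ) z p * p ∧ g t (-ℓ) z (-p) ≤ b t (-ℓ) z (-p) * p) →
      ∀ τ : ℝ, 0 < τ → τ ≤ T → ∀ u : ℝ → ℝ → ℝ, SolQ τ ℓ a f b g u0 u →
        (∀ t ∈ Ioo (0:ℝ) τ, ∀ x ∈ Ioo (-ℓ) ℓ, |u t x| ≤ M) →
        ∀ t ∈ Ioo (0:ℝ) τ, ∀ x ∈ Ioo (-ℓ) ℓ, |spaceDeriv u t x| ≤ M₁ := by
  obtain ⟨q₁, hq, hint⟩ := hint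
  have hq0 : 0 ≤ q₀ := hK.trans hKq
  obtain ⟨r, h, hp, hr, h0, hMr, hd, hpr, hpd⟩ :=
    exists_barrier hq0 hq hψreg.continuousOn hψ1 hint
  refine ⟨q₁, ?_⟩
  intro a f b g u0 _ _ _ _ _ _ ha _ hu0 hf hg τ hτ hτT u hsol hbd t ht x hx
  obtain ⟨hreg, hpde, hbc, hini⟩ := hsol
  have hbd' := abs_le_on_closure hl hreg.1 hbd
  have hini' : ∀ x ∈ Icc (-ℓ) ℓ, ∀ y ∈ Icc (-ℓ) ℓ, |u 0 x - u 0 y| ≤ K * |x - y| := by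
    intro x hx y hy
    rw [hini x hx, hini y hy]; exact hu0 x hx y hy
  have hT' : ∀ t ∈ Ioo 0 τ, t ∈ Icc 0 T := fun t ht => ⟨ht.1.le, ht.2.le.trans hτT⟩
  have hT'' : ∀ t ∈ Ioo 0 τ, t ∈ Ioc 0 T := fun t ht => ⟨ht.1, ht.2.le.trans hτT⟩
  have hp0 := (hpr 0 ⟨le_rfl, hr.le⟩).2
  have hux : HasDerivAt (fun y => u t y) (spaceDeriv u t x) x := (hreg.2.1 t ht x hx).2.1.hasDerivAt
  have heq : ∀ t ∈ Ioo (0:ℝ) τ, ∀ x ∈ Ioo (-ℓ) ℓ, ∃ A : ℝ, 0 < A ∧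
      |timeDeriv u t x - A * spaceDeriv2 u t x| ≤ A * ψ |spaceDeriv u t x| := by
    intro t ht x hx
    have hx' : x ∈ Icc (-ℓ) ℓ := ⟨hx.1.le, hx.2.le⟩
    refine ⟨_, ha t (hT' t ht) x hx' (u t x) (spaceDeriv u t x), ?_⟩
    rw [hpde t ht x hx]
    exact hf t (hT' t ht) x hx' _ (abs_le.1 (hbd t ht x hx)) _
  have hℓ : ℓ ∈ Icc (-ℓ) ℓ := ⟨by linarith, le_rfl⟩
  have hℓ' : -ℓ ∈ Icc (-ℓ) ℓ := ⟨le_rfl, by linarith⟩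
  refine abs_le.2 ⟨?_, ?_⟩
  · have key := sub_le_barrier (u := fun t x => -u t x) (K := K) (q₁ := q₁) (τ := τ) hl hKq hq0 hr
      h0 hMr hd hpr hpd hreg.neg
      (fun t ht x hx => by rw [abs_neg]; exact hbd' t ht x hx)
      (fun x hx y hy => by
        rw [show -u 0 x - -u 0 y = -(u 0 x - u 0 y) by ring, abs_neg]; exact hini' x hx y hy)
      (fun t ht x hx => by
        obtain ⟨A, hA, hAe⟩ := heq t ht x hx
        refine ⟨A, hA, ?_⟩
        rw [timeDeriv_neg, spaceDeriv2_neg, spaceDeriv_neg, abs_neg,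
          show ∀ p q : ℝ, -p - A * -q = -(p - A * q) by intros; ring, abs_neg]
        exact hAe)
      (fun t ht hs => by
        rw [spaceDeriv_neg] at hs
        rw [timeDeriv_neg]
        have h1 := (hg t (hT'' t ht) _ (abs_le.1 (hbd' t ht ℓ hℓ)) _ hs).2.1
        rw [neg_neg] at h1
        linarith [(hbc t ht).1])
      (fun t ht hs => by
        rw [spaceDeriv_neg] at hs
        rw [timeDeriv_neg]
        have h1 := (hg t (hT'' t ht) _ (abs_le.1 (hbd' t ht (-ℓ) hℓ')) _ hs).2.2.2
        rw [neg_neg] at h1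
        linarith [(hbc t ht).2])
    have := deriv_le_of_barrier hr h0 hd hp0 hx hux.neg (key t ht)
    linarith
  · have key := sub_le_barrier (u := u) (K := K) (q₁ := q₁) (τ := τ) hl hKq hq0 hr
      h0 hMr hd hpr hpd hreg hbd' hini' heq
      (fun t ht hs => by
        have h1 := (hg t (hT'' t ht) _ (abs_le.1 (hbd' t ht ℓ hℓ)) _ hs).1
        linarith [(hbc t ht).1])
      (fun t ht hs => by
        have h1 := (hg t (hT'' t ht) _ (abs_le.1 (hbd' t ht (-ℓ) hℓ')) _ hs).2.2.1
        linarith [(hbc t ht).2])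
    exact deriv_le_of_barrier hr h0 hd hp0 hx hux (key t ht)
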